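/- Let f : X → Y be a continuous map between locally finite topological spaces, let y ∈ Y, and let x ∈ X be a point such that f(x) lies in the path component of y. Then the set S of path components z ∈ π₀(F_y(f)) with π₀(i)(z) = [x] is finite, and for any choice of representative points z̃ of the components z ∈ S one has ∑_{z ∈ S} μ(F_y(f), z̃) = μ(X,x)·μ(Y,y)^{-1} in ℚ. -/

import Mathlib

open scoped unitInterval

/-- The homotopy fiber of `f : X → Y` at `y : Y`: pairs `(x, p)` with `p` a path
from `f x` to `y`, topologized as a subspace of `X × C(I, Y)`. -/
abbrev HomotopyFiber {X Y : Type*} [TopologicalSpace X] [TopologicalSpace Y]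
    (f : X → Y) (y : Y) : Type _ :=
  {p : X × C(I, Y) // p.2 0 = f p.1 ∧ p.2 1 = y}

/-- The projection `i : F_y(f) → X`, `(x, p) ↦ x`. -/
def fiberIncl {X Y : Type*} [TopologicalSpace X] [TopologicalSpace Y]
    (f : X → Y) (y : Y) : HomotopyFiber f y → X :=
  fun p => p.1.1

/-- A space is locally finite if all its homotopy groups `π_n`, `n ≥ 1`, at all base
points are finite, and at each base point all but finitely many of them are trivial. -/
def IsLocallyFinite (X : Type*) [TopologicalSpace X] : Prop :=
  ∀ x : X, (∀ n : ℕ, 1 ≤ n → Finite (HomotopyGroup (Fin n) X x)) ∧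
    ∃ N : ℕ, ∀ n : ℕ, N < n → Subsingleton (HomotopyGroup (Fin n) X x)

/-- `μ(X, x) = ∏_{n ≥ 1} |π_n(X, x)|^{(-1)^n}`. -/
noncomputable def mu (X : Type*) [TopologicalSpace X] (x : X) : ℚ :=
  ∏ᶠ n : ℕ, (Nat.card (HomotopyGroup (Fin (n + 1)) X x) : ℚ) ^ ((-1 : ℤ) ^ (n + 1))

/-- The path component of a point, as an element of `π₀(X)`. -/
def toPi0 {X : Type*} [TopologicalSpace X] (x : X) : ZerothHomotopy X :=
  Quotient.mk (pathSetoid X) x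

/-- The map `π₀(f) : π₀(X) → π₀(Y)` induced by a continuous map. -/
def pi0Map {X Y : Type*} [TopologicalSpace X] [TopologicalSpace Y] {f : X → Y}
    (hf : Continuous f) : ZerothHomotopy X → ZerothHomotopy Y :=
  Quot.map f (fun _ _ h => ⟨h.somePath.map hf⟩)


/-- The projection of the homotopy fiber to `X` is continuous. -/
theorem continuous_fiberIncl {X Y : Type*} [TopologicalSpace X] [TopologicalSpace Y]
    (f : X → Y) (y : Y) : Continuous (fiberIncl f y) :=
  continuous_subtype_val.fst

/-!
The homotopy fiber is the fiber over `y` of the end point map from the mapping path space of `f`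
to `Y`. This map is a Hurewicz fibration, and the mapping path space has the homotopy groups of
`X`. Applying `Ω^n` to a fibration and its fiber gives again a fibration and its fiber, so only the
end `π₁F → π₁E → π₁B → π₀F → π₀E` of the long exact sequence is needed: its boundary map identifies
the components of `F` that lie in the component of the base point of `E` with the cosets of the
image of `π₁E` in `π₁B`. With `k n` the order of the kernel of `π_n(F_y(f)) → π_n(X)`, exactness
becomes `k n * k (n + 1) * |π_{n+1}(X)| = |π_{n+1}(Y)| * |π_{n+1}(F_y(f))|`.

In the alternating product over `n` the factors `k n` telescope, and what remains is
`μ(F_y(f), z) = μ(X, x) / μ(Y, y) * (k 0)⁻¹`. As `k 0` is the number of components in the sum, all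
summands are equal and their sum is `μ(X, x) / μ(Y, y)`.
-/

open scoped Topology.Homotopy

section Box

/-- The open box `∂I^N × I ∪ I^N × {0}` in `I^N × I`. -/
def openBox (N : Type*) : Set ((N → I) × I) :=
  {q | q.1 ∈ Cube.boundary N ∨ q.2 = 0}

variable {N : Type*}

/-- The homothety of ratio `c` centred at the point `(1/2, …, 1/2, 2)`, with coordinates
clamped to the unit interval. -/
noncomputable def boxHomothety (c : ℝ) (q : (N → I) × I) : (N → I) × I :=
  (fun i => Set.projIcc 0 1 zero_le_one ((1 + c * (2 * q.1 i - 1)) / 2),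
    Set.projIcc 0 1 zero_le_one (2 - c * (2 - q.2)))

theorem continuous_boxHomothety :
    Continuous fun p : ℝ × ((N → I) × I) => boxHomothety p.1 p.2 := by
  unfold boxHomothety
  fun_prop

theorem boxHomothety_one (q : (N → I) × I) : boxHomothety 1 q = q := by
  have clamp (r : ℝ) (t : I) (h : r = t) : Set.projIcc 0 1 zero_le_one r = t := by
    rw [h, Set.projIcc_val]
  exact Prod.ext (funext fun i => clamp _ _ (by ring)) (clamp _ _ (by ring))

variable [Fintype N]

/-- The gauge with respect to the point `(1/2, …, 1/2, 2)` above the cylinder `I^N × I`: the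
ratio in which a point divides the segment from there to the open box. -/
noncomputable def boxGauge (q : (N → I) × I) : ℝ :=
  max ((2 - q.2) / 2) ‖fun i => 2 * (q.1 i : ℝ) - 1‖

theorem continuous_boxGauge : Continuous (boxGauge (N := N)) := by
  unfold boxGauge
  fun_prop

theorem boxGauge_pos (q : (N → I) × I) : 0 < boxGauge q :=
  lt_max_of_lt_left (by linarith [q.2.2.2])

theorem boxGauge_le_one (q : (N → I) × I) : boxGauge q ≤ 1 := by
  refine max_le (by linarith [q.2.2.1]) ((pi_norm_le_iff_of_nonneg zero_le_one).2 fun i => ?_)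
  rw [Real.norm_eq_abs, abs_le]
  constructor <;> linarith [(q.1 i).2.1, (q.1 i).2.2]

theorem boxGauge_eq_one {q : (N → I) × I} (hq : q ∈ openBox N) : boxGauge q = 1 := by
  refine (boxGauge_le_one q).antisymm ?_
  rcases hq with ⟨i, hi⟩ | hq
  · refine le_max_of_le_right (le_trans ?_ (norm_le_pi_norm _ i))
    rcases hi with hi | hi <;> norm_num [hi]
  · exact le_max_of_le_left (by norm_num [hq])

theorem boxHomothety_mem_openBox (q : (N → I) × I) :
    boxHomothety (boxGauge q)⁻¹ q ∈ openBox N := by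
  have hpos := boxGauge_pos q
  rcases max_choice ((2 - q.2 : ℝ) / 2) ‖fun i => 2 * (q.1 i : ℝ) - 1‖ with h | h
  · refine Or.inr (Set.projIcc_of_le_left zero_le_one ?_)
    have h' : (2 - q.2 : ℝ) = 2 * boxGauge q := by rw [boxGauge, h]; ring
    rw [h', mul_left_comm, inv_mul_cancel₀ hpos.ne']
    norm_num
  · change boxGauge q = _ at h
    obtain ⟨i, hi⟩ : ∃ i, boxGauge q ≤ |2 * (q.1 i : ℝ) - 1| := by
      by_contra! hlt
      exact absurd h ((pi_norm_lt_iff hpos).2 hlt).ne'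
    refine Or.inl ⟨i, ?_⟩
    rcases le_abs.1 hi with hi | hi
    · refine Or.inr (Set.projIcc_of_right_le zero_le_one ?_)
      have : 1 ≤ (boxGauge q)⁻¹ * (2 * q.1 i - 1) := by
        rwa [inv_mul_eq_div, one_le_div hpos]
      linarith
    · refine Or.inl (Set.projIcc_of_le_left zero_le_one ?_)
      have : 1 ≤ (boxGauge q)⁻¹ * -(2 * q.1 i - 1) := by
        rwa [inv_mul_eq_div, one_le_div hpos]
      linarith

/-- The flow runs along the rays through `(1/2, …, 1/2, 2)`, and `τ q` is the time at which it
reaches `q`. -/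
theorem exists_flow_from_openBox (N : Type*) [Finite N] :
    ∃ (τ : C((N → I) × I, I)) (D : C(((N → I) × I) × I, (N → I) × I)),
      (∀ q ∈ openBox N, τ q = 0) ∧ (∀ q, D (q, τ q) = q) ∧ ∀ q, D (q, 0) ∈ openBox N := by
  cases nonempty_fintype N
  have hcont := continuous_boxGauge (N := N)
  refine ⟨⟨fun q => ⟨1 - boxGauge q, by linarith [boxGauge_le_one q],
      by linarith [boxGauge_pos q]⟩, by fun_prop⟩,
    ⟨fun p => boxHomothety ((1 - p.2) / boxGauge p.1) p.1, ?_⟩, fun q hq => ?_, fun q => ?_,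
    fun q => ?_⟩
  · exact continuous_boxHomothety.comp
      (((by fun_prop : Continuous fun p : ((N → I) × I) × I => (1 - p.2 : ℝ)).div
        (hcont.comp continuous_fst) fun p => (boxGauge_pos p.1).ne').prodMk continuous_fst)
  · exact Subtype.ext (by simp [boxGauge_eq_one hq])
  · simp only [ContinuousMap.coe_mk, sub_sub_cancel, div_self (boxGauge_pos q).ne',
      boxHomothety_one]
  · simpa using boxHomothety_mem_openBox q

theorem isClosed_boundary (N : Type*) [Finite N] : IsClosed (Cube.boundary N) := by
  have : Cube.boundary N = ⋃ i : N, {y | y i = 0 ∨ y i = 1} := by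
    ext; simp [Cube.boundary]
  rw [this]
  exact isClosed_iUnion_of_finite fun i =>
    ((isClosed_singleton.preimage (continuous_apply i)).union
      (isClosed_singleton.preimage (continuous_apply i)))

theorem exists_retraction_openBox (N : Type*) [Finite N] :
    ∃ ρ : C((N → I) × I, (N → I) × I), (∀ q, ρ q ∈ openBox N) ∧
      (ContinuousMap.id _).HomotopicRel ρ (openBox N) := by
  obtain ⟨τ, D, hτ, hD, hbox⟩ := exists_flow_from_openBox N
  refine ⟨D.comp ⟨fun q => (q, 0), by fun_prop⟩, hbox,
    ⟨⟨⟨D.comp ⟨fun p => (p.2, unitInterval.symm p.1 * τ p.2), by fun_prop⟩, fun q => ?_,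
      fun q => ?_⟩, fun u q hq => ?_⟩⟩⟩
  · simpa using hD q
  · simp
  · have hq' := hD q
    rw [hτ q hq] at hq'
    simpa [hτ q hq] using hq'

theorem homotopicRel_of_eqOn_openBox {N : Type*} [Finite N] {Y : Type*} [TopologicalSpace Y]
    {F G : C((N → I) × I, Y)} (h : Set.EqOn F G (openBox N)) :
    F.HomotopicRel G (openBox N) := by
  obtain ⟨ρ, hρ, hhom⟩ := exists_retraction_openBox N
  have hFG : F.comp ρ = G.comp ρ := ContinuousMap.ext fun q => h (hρ q)
  have hF := hhom.comp_continuousMap F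
  have hG := hhom.comp_continuousMap G
  rw [← hFG] at hG
  exact hF.trans hG.symm

theorem exists_homotopy_extension {N : Type*} [Finite N] {T Y : Type*} [TopologicalSpace T]
    [TopologicalSpace Y] (a : C(T × (N → I), Y)) (b : C(T × Cube.boundary N × I, Y))
    (hab : ∀ t y, b (t, (y, 0)) = a (t, y)) :
    ∃ F : C(T × ((N → I) × I), Y), (∀ t y, F (t, (y, 0)) = a (t, y)) ∧
      ∀ t (y : Cube.boundary N) s, F (t, (y, s)) = b (t, (y, s)) := by
  classical
  obtain ⟨ρ, hρ, hhom⟩ := exists_retraction_openBox N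
  have ρ_eq (q) (hq : q ∈ openBox N) : ρ q = q := (hhom.fst_eq_snd hq).symm
  let side : Set (T × ((N → I) × I)) := {r | r.2.1 ∈ Cube.boundary N}
  let bottom : Set (T × ((N → I) × I)) := {r | r.2.2 = 0}
  let g (r : T × ((N → I) × I)) : Y :=
    if h : r ∈ side then b (r.1, (⟨r.2.1, h⟩, r.2.2)) else a (r.1, r.2.1)
  have g_side (r) (h : r ∈ side) : g r = b (r.1, (⟨r.2.1, h⟩, r.2.2)) := dif_pos h
  have g_bottom (r) (h : r ∈ bottom) : g r = a (r.1, r.2.1) := by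
    by_cases hr : r ∈ side
    · rw [g_side r hr, show r.2.2 = 0 from h, hab]
    · exact dif_neg hr
  have hg : ContinuousOn g (side ∪ bottom) := by
    refine ContinuousOn.union_of_isClosed ?_ ?_
      ((isClosed_boundary N).preimage (continuous_fst.comp continuous_snd))
      (isClosed_singleton.preimage (continuous_snd.comp continuous_snd))
    · rw [continuousOn_iff_continuous_domRestrict]
      have : Continuous fun r : side => b (r.1.1, (⟨r.1.2.1, r.2⟩, r.1.2.2)) := by fun_prop
      exact this.congr fun r => (g_side r.1 r.2).symm
    · have : Continuous fun r : T × ((N → I) × I) => a (r.1, r.2.1) := by fun_prop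
      exact this.continuousOn.congr g_bottom
  refine ⟨⟨fun r => g (r.1, ρ r.2), hg.comp_continuous (by fun_prop) fun r => hρ r.2⟩,
    fun t y => ?_, fun t y s => ?_⟩
  · simp only [ContinuousMap.coe_mk, ρ_eq (y, 0) (Or.inr rfl)]
    exact g_bottom _ rfl
  · simp only [ContinuousMap.coe_mk, ρ_eq (y, s) (Or.inl y.2)]
    exact g_side _ y.2

theorem exists_path_extension {T Y : Type*} [TopologicalSpace T] [TopologicalSpace Y]
    (a : C(T, C(I, Y))) (b₀ b₁ : C(T × I, Y)) (h₀ : ∀ t, b₀ (t, 0) = a t 0)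
    (h₁ : ∀ t, b₁ (t, 0) = a t 1) :
    ∃ P : C(T × I, C(I, Y)), (∀ t, P (t, 0) = a t) ∧ (∀ r, P r 0 = b₀ r) ∧ ∀ r, P r 1 = b₁ r := by
  let ends (r : T × Cube.boundary Unit × I) : Y :=
    if (r.2.1.1 () : ℝ) ≤ 1 / 2 then b₀ (r.1, r.2.2) else b₁ (r.1, r.2.2)
  have ends_zero (t : T) (y : Cube.boundary Unit) (u : I) (hy : y.1 () = 0) :
      ends (t, (y, u)) = b₀ (t, u) := if_pos (by simp [hy])
  have ends_one (t : T) (y : Cube.boundary Unit) (u : I) (hy : y.1 () = 1) :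
      ends (t, (y, u)) = b₁ (t, u) := if_neg (by norm_num [hy])
  have continuous_ends : Continuous ends := by
    have continuous_coord : Continuous fun r : T × Cube.boundary Unit × I => (r.2.1.1 () : ℝ) :=
      continuous_subtype_val.comp ((continuous_apply ()).comp
        (continuous_subtype_val.comp continuous_snd.fst))
    refine Continuous.if_le (by fun_prop) (by fun_prop) continuous_coord continuous_const ?_
    rintro ⟨t, ⟨y, ⟨_, hy | hy⟩⟩, s⟩ h <;> norm_num [show y () = _ from hy] at h
  obtain ⟨H, hH_bottom, hH_side⟩ := exists_homotopy_extension (N := Unit) (T := T)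
    ⟨fun r => a r.1 (r.2 ()), by fun_prop⟩ ⟨ends, continuous_ends⟩ <| by
      rintro t ⟨y, ⟨_, hy | hy⟩⟩
      · exact (ends_zero _ _ _ hy).trans ((h₀ t).trans (congrArg (a t) hy.symm))
      · exact (ends_one _ _ _ hy).trans ((h₁ t).trans (congrArg (a t) hy.symm))
  refine ⟨.curry ⟨fun r => H (r.1.1, (fun _ => r.2, r.1.2)), by fun_prop⟩, fun t => ?_, fun r => ?_,
    fun r => ?_⟩
  · exact ContinuousMap.ext fun s => hH_bottom t _
  · exact (hH_side _ ⟨_, (), Or.inl rfl⟩ _).trans (ends_zero _ _ _ rfl)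
  · exact (hH_side _ ⟨_, (), Or.inr rfl⟩ _).trans (ends_one _ _ _ rfl)

end Box

section Fibration

variable {E B F : Type*} [TopologicalSpace E] [TopologicalSpace B] [TopologicalSpace F]

/-- Hurewicz fibrations: maps with the homotopy lifting property. The test spaces are restricted
to `Type`, whatever the universes of `E` and `B`; cubes and their products suffice here. -/
def IsHurewiczFibration (p : C(E, B)) : Prop :=
  ∀ (T : Type) [TopologicalSpace T] (g : C(T × I, B)) (a : C(T, E)), (∀ t, p (a t) = g (t, 0)) →
    ∃ H : C(T × I, E), (∀ q, p (H q) = g q) ∧ ∀ t, H (t, 0) = a t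

theorem isHurewiczFibration_fst : IsHurewiczFibration (ContinuousMap.fst : C(E × B, E)) :=
  fun _ _ g a h => ⟨⟨fun q => (g q, (a q.1).2), by fun_prop⟩, fun _ => rfl,
    fun t => Prod.ext (h t).symm rfl⟩

theorem isHurewiczFibration_snd : IsHurewiczFibration (ContinuousMap.snd : C(E × B, B)) :=
  fun _ _ g a h => ⟨⟨fun q => ((a q.1).1, g q), by fun_prop⟩, fun _ => rfl,
    fun t => Prod.ext rfl (h t).symm⟩

namespace IsHurewiczFibration

theorem comp {q : C(B, F)} {p : C(E, B)} (hq : IsHurewiczFibration q)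
    (hp : IsHurewiczFibration p) : IsHurewiczFibration (q.comp p) := by
  intro T _ g a h
  obtain ⟨G, hG, hG₀⟩ := hq T g (p.comp a) h
  obtain ⟨H, hH, hH₀⟩ := hp T G a fun t => (hG₀ t).symm
  exact ⟨H, fun r => (congrArg q (hH r)).trans (hG r), hH₀⟩

theorem exists_path_lift {p : C(E, B)} (hp : IsHurewiczFibration p) {e : E} {b : B}
    (γ : Path (p e) b) : ∃ (e' : E) (δ : Path e e'), ∀ s, p (δ s) = γ s := by
  obtain ⟨H, hH, hH₀⟩ := hp Unit ⟨fun q => γ q.2, by fun_prop⟩ (.const _ e) fun _ => γ.source.symm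
  exact ⟨H ((), 1), ⟨⟨fun s => H ((), s), by fun_prop⟩, hH₀ (), rfl⟩, fun s => hH ((), s)⟩

/-- Flow the cylinder out of the open box and lift along the flow lines. -/
theorem exists_lift_rel_boundary {p : C(E, B)} (hp : IsHurewiczFibration p) {N : Type} [Finite N]
    {T : Type} [TopologicalSpace T] (g : C(T × ((N → I) × I), B)) (a : C(T × (N → I), E))
    (h : ∀ t, ∀ q ∈ openBox N, p (a (t, q.1)) = g (t, q)) :
    ∃ H : C(T × ((N → I) × I), E), (∀ q, p (H q) = g q) ∧
      ∀ t, ∀ q ∈ openBox N, H (t, q) = a (t, q.1) := by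
  obtain ⟨τ, D, hτ, hD, hbox⟩ := exists_flow_from_openBox N
  obtain ⟨H, hH, hH₀⟩ := hp (T × ((N → I) × I))
    (g.comp ⟨fun r => (r.1.1, D (r.1.2, r.2)), by fun_prop⟩)
    (a.comp ⟨fun r => (r.1, (D (r.2, 0)).1), by fun_prop⟩) fun r => h r.1 _ (hbox r.2)
  refine ⟨H.comp ⟨fun r => (r, τ r.2), by fun_prop⟩, fun r => ?_, fun t q hq => ?_⟩
  · simp only [ContinuousMap.comp_apply, ContinuousMap.coe_mk, hH, hD]
  · have hDq := hD q
    rw [hτ q hq] at hDq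
    simp only [ContinuousMap.comp_apply, ContinuousMap.coe_mk, hτ q hq, hH₀, hDq]

end IsHurewiczFibration

end Fibration

section GenLoopMap

variable {N : Type*} {X Y Z : Type*} [TopologicalSpace X] [TopologicalSpace Y] [TopologicalSpace Z]
  {x : X} {y : Y} {z : Z}

/-- The map `Ω^N f` between the spaces of generalized loops. -/
def genLoopMap (N : Type*) (f : C(X, Y)) (h : f x = y) : C(Ω^ N X x, Ω^ N Y y) where
  toFun a := ⟨f.comp a.1, fun t ht => (congrArg f (a.2 t ht)).trans h⟩
  continuous_toFun := (f.continuous_postcomp.comp continuous_subtype_val).subtype_mk _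

theorem genLoopMap_const (f : C(X, Y)) (h : f x = y) :
    genLoopMap N f h GenLoop.const = GenLoop.const :=
  GenLoop.ext _ _ fun _ => h

theorem genLoop_homotopic_iff_joined {a b : Ω^ N X x} : GenLoop.Homotopic a b ↔ Joined a b := by
  constructor
  · rintro ⟨H⟩
    let γ : C(I, Ω^ N X x) := ⟨fun s => ⟨H.curry s, fun t ht => (H.eq_fst s ht).trans (a.2 t ht)⟩,
      H.curry.continuous.subtype_mk _⟩
    exact ⟨γ, GenLoop.ext _ _ fun t => H.apply_zero t, GenLoop.ext _ _ fun t => H.apply_one t⟩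
  · rintro ⟨γ⟩
    refine ⟨⟨⟨⟨fun q => γ q.1 q.2, by fun_prop⟩, fun t => ?_, fun t => ?_⟩, fun s t ht => ?_⟩⟩
    · exact congrArg (· t) γ.source
    · exact congrArg (· t) γ.target
    · exact ((γ s).2 t ht).trans (a.2 t ht).symm

theorem isHurewiczFibration_genLoopMap {N : Type} [Finite N] {p : C(X, Y)}
    (hp : IsHurewiczFibration p) (h : p x = y) : IsHurewiczFibration (genLoopMap N p h) := by
  intro T _ g a ha
  have hga : ∀ t, ∀ q ∈ openBox N, p (a t q.1) = g (t, q.2) q.1 := by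
    rintro t q (hq | hq)
    · exact ((congrArg p ((a t).2 _ hq)).trans h).trans ((g (t, q.2)).2 _ hq).symm
    · rw [hq, ← ha t]
      rfl
  obtain ⟨H, hH, hHbox⟩ := hp.exists_lift_rel_boundary (N := N) (T := T)
    ⟨fun r => g (r.1, r.2.2) r.2.1, by fun_prop⟩ ⟨fun r => a r.1 r.2, by fun_prop⟩ hga
  refine ⟨⟨fun r => ⟨⟨fun t => H (r.1, (t, r.2)), by fun_prop⟩, fun t ht => ?_⟩,
    .subtype_mk (ContinuousMap.curry ⟨fun q : (T × I) × (N → I) => H (q.1.1, (q.2, q.1.2)),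
      by fun_prop⟩).continuous _⟩, fun r => ?_, fun t => ?_⟩
  · exact (hHbox r.1 (t, r.2) (Or.inl ht)).trans ((a r.1).2 t ht)
  · exact GenLoop.ext _ _ fun t => hH (r.1, (t, r.2))
  · exact GenLoop.ext _ _ fun s => hHbox t (s, 0) (Or.inr rfl)

end GenLoopMap

section FiberSequence

variable {E B F : Type*} [TopologicalSpace E] [TopologicalSpace B] [TopologicalSpace F]

/-- `F → E → B` is a fiber sequence if `p : E → B` is a fibration and `j : F → E` identifies `F`
with the fiber of `p` over `b`. -/
structure IsFiberSequence (j : C(F, E)) (p : C(E, B)) (b : B) : Prop where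
  isEmbedding : Topology.IsEmbedding j
  range_eq : Set.range j = p ⁻¹' {b}
  isHurewiczFibration : IsHurewiczFibration p

namespace IsFiberSequence

variable {j : C(F, E)} {p : C(E, B)} {b : B}

theorem proj_incl (h : IsFiberSequence j p b) (w : F) : p (j w) = b :=
  h.range_eq.subset (Set.mem_range_self w)

theorem exists_lift (h : IsFiberSequence j p b) {T : Type*} [TopologicalSpace T] (a : C(T, E))
    (ha : ∀ t, p (a t) = b) : ∃ c : C(T, F), j.comp c = a := by
  choose c hc using fun t => h.range_eq.superset (ha t)
  exact ⟨⟨c, h.isEmbedding.continuous_iff.2 (a.continuous.congr fun t => (hc t).symm)⟩,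
    ContinuousMap.ext hc⟩

theorem genLoop {N : Type} [Finite N] (h : IsFiberSequence j p b) {w : F} {e : E} (hj : j w = e)
    (hp : p e = b) :
    IsFiberSequence (genLoopMap N j hj) (genLoopMap N p hp) GenLoop.const where
  isEmbedding := by
    have hval : Topology.IsEmbedding (Subtype.val ∘ genLoopMap N j hj) :=
      (ContinuousMap.isEmbedding_postcomp j h.isEmbedding).comp .subtypeVal
    exact .of_comp (ContinuousMap.continuous _) continuous_subtype_val hval
  range_eq := by
    refine Set.Subset.antisymm ?_ fun a ha => ?_
    · rintro _ ⟨c, rfl⟩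
      exact GenLoop.ext _ _ fun t => h.proj_incl (c t)
    · obtain ⟨c, hc⟩ := h.exists_lift a.1 fun t => congrArg (· t) ha
      refine ⟨⟨c, fun t ht => h.isEmbedding.injective ?_⟩, Subtype.ext hc⟩
      rw [hj, ← a.2 t ht, ← hc]
      rfl
  isHurewiczFibration := isHurewiczFibration_genLoopMap h.isHurewiczFibration hp

end IsFiberSequence

end FiberSequence

section PathClasses

variable {E B : Type*} [TopologicalSpace E] [TopologicalSpace B] {b : B} {e e' e'' : E}

/-- The loop class in the base defined by a path class between two points over `b`. -/
def pushClass (p : C(E, B)) (h : p e = b) (h' : p e' = b) (q : Path.Homotopic.Quotient e e') :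
    Path.Homotopic.Quotient b b :=
  (q.map p).cast h.symm h'.symm

theorem pushClass_trans (p : C(E, B)) (h : p e = b) (h' : p e' = b) (h'' : p e'' = b)
    (q : Path.Homotopic.Quotient e e') (q' : Path.Homotopic.Quotient e' e'') :
    pushClass p h h'' (q.trans q') = (pushClass p h h' q).trans (pushClass p h' h'' q') := by
  induction q, q' using Path.Homotopic.Quotient.ind₂ with | mk γ γ' =>
  refine congrArg Path.Homotopic.Quotient.mk ?_
  dsimp only
  rw [Path.map_trans, Path.cast_trans]

theorem pushClass_symm (p : C(E, B)) (h : p e = b) (h' : p e' = b)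
    (q : Path.Homotopic.Quotient e e') :
    pushClass p h' h q.symm = (pushClass p h h' q).symm := by
  induction q using Path.Homotopic.Quotient.ind with | mk γ => rfl

end PathClasses

theorem toPi0_eq_toPi0_iff {X : Type*} [TopologicalSpace X] {x x' : X} :
    toPi0 x = toPi0 x' ↔ Joined x x' :=
  Quotient.eq (r := pathSetoid X)

theorem card_ker_mul_card_range {G H : Type*} [Group G] [Group H] (φ : G →* H) :
    Nat.card φ.ker * Nat.card φ.range = Nat.card G := by
  rw [← Subgroup.index_ker, Subgroup.card_mul_index]

namespace IsFiberSequence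

variable {E B F : Type*} [TopologicalSpace E] [TopologicalSpace B] [TopologicalSpace F]
  {j : C(F, E)} {p : C(E, B)} {b : B} {e : E}

theorem pushClass_map (h : IsFiberSequence j p b) {v v' : F} (q : Path.Homotopic.Quotient v v') :
    pushClass p (h.proj_incl v) (h.proj_incl v') (q.map j) = .refl b := by
  induction q using Path.Homotopic.Quotient.ind with | mk γ =>
  exact congrArg Path.Homotopic.Quotient.mk (Path.ext (funext fun s => h.proj_incl (γ s)))

/-- Lift a null-homotopy of the projected path relative to its end points; the end of the lift
runs in the fiber. -/
theorem exists_map_eq_of_pushClass_eq_refl (h : IsFiberSequence j p b) {v v' : F}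
    (q : Path.Homotopic.Quotient (j v) (j v'))
    (hq : pushClass p (h.proj_incl v) (h.proj_incl v') q = .refl b) :
    ∃ q' : Path.Homotopic.Quotient v v', q'.map j = q := by
  induction q using Path.Homotopic.Quotient.ind with | mk γ =>
  obtain ⟨G⟩ := Path.Homotopic.Quotient.exact hq
  have G_box : ∀ r ∈ openBox Unit, p (γ (r.1 ())) = G (r.2, r.1 ()) := by
    rintro ⟨r, s⟩ (⟨_, hr | hr⟩ | rfl)
    · change r () = 0 at hr
      dsimp only
      rw [hr, γ.source, G.source, h.proj_incl]
    · change r () = 1 at hr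
      dsimp only
      rw [hr, γ.target, G.target, h.proj_incl]
    · exact (G.apply_zero (r ())).symm
  obtain ⟨H, hH, hHbox⟩ := h.isHurewiczFibration.exists_lift_rel_boundary (N := Unit) (T := Unit)
    ⟨fun r => G (r.2.2, r.2.1 ()), by fun_prop⟩ ⟨fun r => γ (r.2 ()), by fun_prop⟩ fun _ => G_box
  have H_zero (s) : H ((), (fun _ => s, 0)) = γ s := hHbox () _ (Or.inr rfl)
  have H_source (s) : H ((), (fun _ => 0, s)) = j v :=
    (hHbox () (fun _ => 0, s) (Or.inl ⟨(), Or.inl rfl⟩)).trans γ.source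
  have H_target (s) : H ((), (fun _ => 1, s)) = j v' :=
    (hHbox () (fun _ => 1, s) (Or.inl ⟨(), Or.inr rfl⟩)).trans γ.target
  obtain ⟨δ, hδ⟩ := h.exists_lift (T := I) ⟨fun s => H ((), (fun _ => s, 1)), by fun_prop⟩
    fun s => (hH _).trans (G.apply_one s)
  have hδ' (s) : j (δ s) = H ((), (fun _ => s, 1)) := congrArg (· s) hδ
  refine ⟨.mk ⟨δ, h.isEmbedding.injective ((hδ' 0).trans (H_source 1)),
    h.isEmbedding.injective ((hδ' 1).trans (H_target 1))⟩, ?_⟩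
  rw [← Path.Homotopic.Quotient.mk_map, Path.Homotopic.Quotient.eq]
  refine .symm ⟨⟨⟨⟨fun r => H ((), (fun _ => r.2, r.1)), by fun_prop⟩, H_zero,
    fun s => (hδ' s).symm⟩, ?_⟩⟩
  rintro t s (rfl | rfl)
  · exact (H_source t).trans γ.source.symm
  · exact (H_target t).trans γ.target.symm

theorem range_mapOfEq_eq_ker (h : IsFiberSequence j p b) {w : F} (hj : j w = e) (hp : p e = b) :
    (FundamentalGroup.mapOfEq j hj).range = (FundamentalGroup.mapOfEq p hp).ker := by
  subst hj
  ext q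
  rw [MonoidHom.mem_ker, FundamentalGroup.mapOfEq_apply]
  constructor
  · rintro ⟨q', rfl⟩
    rw [FundamentalGroup.mapOfEq_apply, Path.Homotopic.Quotient.cast_rfl_rfl]
    exact h.pushClass_map q'
  · intro hq
    obtain ⟨q', rfl⟩ := h.exists_map_eq_of_pushClass_eq_refl q hq
    exact ⟨q', by rw [FundamentalGroup.mapOfEq_apply, Path.Homotopic.Quotient.cast_rfl_rfl]⟩

theorem joined_iff_exists_pushClass_trans (h : IsFiberSequence j p b) (hp : p e = b) {v v' : F}
    (γ : Path.Homotopic.Quotient e (j v)) (γ' : Path.Homotopic.Quotient e (j v')) :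
    Joined v v' ↔ ∃ l : Path.Homotopic.Quotient e e,
      (pushClass p hp hp l).trans (pushClass p hp (h.proj_incl v) γ) =
        pushClass p hp (h.proj_incl v') γ' := by
  constructor
  · rintro ⟨δ⟩
    refine ⟨(γ'.trans (Path.Homotopic.Quotient.map (.mk δ) j).symm).trans γ.symm, ?_⟩
    rw [pushClass_trans p hp (h.proj_incl v), pushClass_trans p hp (h.proj_incl v'),
      pushClass_symm, pushClass_symm, h.pushClass_map, ← Path.Homotopic.Quotient.mk_refl,
      ← Path.Homotopic.Quotient.mk_symm, Path.refl_symm, Path.Homotopic.Quotient.mk_refl,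
      Path.Homotopic.Quotient.trans_refl, Path.Homotopic.Quotient.trans_assoc,
      Path.Homotopic.Quotient.symm_trans, Path.Homotopic.Quotient.trans_refl]
  · rintro ⟨l, hl⟩
    obtain ⟨q, -⟩ := h.exists_map_eq_of_pushClass_eq_refl ((γ.symm.trans l.symm).trans γ') <| by
      rw [pushClass_trans p (h.proj_incl v) hp, pushClass_trans p (h.proj_incl v) hp,
        pushClass_symm, pushClass_symm, ← hl, ← Path.Homotopic.Quotient.trans_assoc,
        Path.Homotopic.Quotient.trans_assoc _ _ (pushClass p hp hp l),
        Path.Homotopic.Quotient.symm_trans, Path.Homotopic.Quotient.trans_refl,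
        Path.Homotopic.Quotient.symm_trans]
    induction q using Path.Homotopic.Quotient.ind with | mk δ => exact ⟨δ⟩

theorem exists_pushClass_eq (h : IsFiberSequence j p b) (hp : p e = b)
    (β : Path.Homotopic.Quotient b b) : ∃ (v : F) (γ : Path.Homotopic.Quotient e (j v)),
      pushClass p hp (h.proj_incl v) γ = β := by
  subst hp
  induction β using Path.Homotopic.Quotient.ind with | mk β =>
  obtain ⟨e', γ, hγ⟩ := h.isHurewiczFibration.exists_path_lift β
  obtain ⟨v, rfl⟩ := h.range_eq.superset <|
    show p e' = p e by rw [← γ.target, hγ, β.target]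
  exact ⟨v, .mk γ, congrArg Path.Homotopic.Quotient.mk (Path.ext (funext hγ))⟩

/-- The boundary map of the exact sequence identifies the components of the fiber that lie in the
component of `e` with the cosets of `p_* π₁(E, e)`. Both sets are quotients of the set of path
classes from `e` to the fiber. -/
theorem card_components_eq_index (h : IsFiberSequence j p b) (hp : p e = b) :
    Nat.card {v : ZerothHomotopy F // pi0Map j.continuous v = toPi0 e} =
      (FundamentalGroup.mapOfEq p hp).range.index := by
  let toCoset (r : Σ v : F, Path.Homotopic.Quotient e (j v)) :
      FundamentalGroup B b ⧸ (FundamentalGroup.mapOfEq p hp).range :=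
    QuotientGroup.mk (pushClass p hp (h.proj_incl r.1) r.2)
  let toComponent (r : Σ v : F, Path.Homotopic.Quotient e (j v)) :
      {v : ZerothHomotopy F // pi0Map j.continuous v = toPi0 e} :=
    ⟨toPi0 r.1, toPi0_eq_toPi0_iff.2
      (r.2.ind (motive := fun _ => Joined (j r.1) e) fun γ => ⟨γ.symm⟩)⟩
  have toCoset_surjective : Function.Surjective toCoset := by
    rintro ⟨β⟩
    obtain ⟨v, γ, rfl⟩ := h.exists_pushClass_eq hp β
    exact ⟨⟨v, γ⟩, rfl⟩
  have toComponent_surjective : Function.Surjective toComponent := by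
    rintro ⟨⟨v⟩, hv⟩
    obtain ⟨γ⟩ := toPi0_eq_toPi0_iff.1 hv
    exact ⟨⟨v, .mk γ.symm⟩, rfl⟩
  have ker_eq : Setoid.ker toCoset = Setoid.ker toComponent := by
    ext ⟨v, γ⟩ ⟨v', γ'⟩
    rw [Setoid.ker_def, Setoid.ker_def, QuotientGroup.eq, Subtype.ext_iff]
    refine Iff.trans ?_ ((h.joined_iff_exists_pushClass_trans hp γ γ').symm.trans
      toPi0_eq_toPi0_iff.symm)
    refine exists_congr fun l => ?_
    rw [eq_inv_mul_iff_mul_eq, FundamentalGroup.mapOfEq_apply]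
    rfl
  exact Nat.card_congr ((Setoid.quotientKerEquivOfSurjective toComponent
    toComponent_surjective).symm.trans ((Quotient.congrRight fun r s => by rw [ker_eq]).trans
    (Setoid.quotientKerEquivOfSurjective toCoset toCoset_surjective)))

theorem card_components_mul_card_range (h : IsFiberSequence j p b) (hp : p e = b) :
    Nat.card {v : ZerothHomotopy F // pi0Map j.continuous v = toPi0 e} *
      Nat.card (FundamentalGroup.mapOfEq p hp).range = Nat.card (FundamentalGroup B b) := by
  rw [h.card_components_eq_index hp, mul_comm, Subgroup.card_mul_index]

/-- The end `π₁F → π₁E → π₁B → π₀F → π₀E` of the long exact sequence, in terms of cardinals. -/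
theorem card_components_mul_card_ker (h : IsFiberSequence j p b) {w : F} (hj : j w = e)
    (hp : p e = b) :
    Nat.card {v : ZerothHomotopy F // pi0Map j.continuous v = toPi0 e} *
      Nat.card (FundamentalGroup.mapOfEq j hj).ker * Nat.card (FundamentalGroup E e) =
      Nat.card (FundamentalGroup B b) * Nat.card (FundamentalGroup F w) := by
  rw [← h.card_components_mul_card_range hp,
    ← card_ker_mul_card_range (FundamentalGroup.mapOfEq p hp),
    ← card_ker_mul_card_range (FundamentalGroup.mapOfEq j hj), h.range_mapOfEq_eq_ker hj hp]
  ring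

end IsFiberSequence

section HomotopyGroupMap

variable {X Y Z : Type*} [TopologicalSpace X] [TopologicalSpace Y] [TopologicalSpace Z]
  {x : X} {y : Y} {z : Z}

/-- The induced map of homotopy groups `π_N(f) : π_N(X, x) → π_N(Y, y)`. -/
def homotopyGroupMap (N : Type*) (f : C(X, Y)) (h : f x = y) :
    HomotopyGroup N X x → HomotopyGroup N Y y :=
  Quotient.map (genLoopMap N f h) fun _ _ hab => hab.comp_continuousMap f

/-- The kernel of `π_N(f)`. It is only a pointed set, so that `N` may be empty. -/
def homotopyGroupKer (N : Type*) (f : C(X, Y)) (h : f x = y) : Set (HomotopyGroup N X x) :=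
  {α | homotopyGroupMap N f h α = default}

theorem homotopyGroupMap_default (N : Type*) (f : C(X, Y)) (h : f x = y) :
    homotopyGroupMap N f h default = default :=
  congrArg (Quotient.mk _) (genLoopMap_const f h)

theorem homotopyGroupMap_comp (N : Type*) (f : C(X, Y)) (g : C(Y, Z)) (h : f x = y) (h' : g y = z)
    (α : HomotopyGroup N X x) :
    homotopyGroupMap N (g.comp f) ((congrArg g h).trans h') α =
      homotopyGroupMap N g h' (homotopyGroupMap N f h α) := by
  induction α using Quotient.ind with | _ a => rfl

theorem homotopyGroupKer_comp_of_injective {N : Type*} (f : C(X, Y)) (g : C(Y, Z)) (h : f x = y)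
    (h' : g y = z) (hg : Function.Injective (homotopyGroupMap N g h')) :
    homotopyGroupKer N (g.comp f) ((congrArg g h).trans h') = homotopyGroupKer N f h := by
  ext α
  change homotopyGroupMap N _ _ α = default ↔ homotopyGroupMap N f h α = default
  rw [homotopyGroupMap_comp, ← homotopyGroupMap_default N g h']
  exact hg.eq_iff

theorem bijective_homotopyGroupMap_homeomorph (N : Type*) (φ : X ≃ₜ Y) (h : φ x = y) :
    Function.Bijective (homotopyGroupMap N (φ : C(X, Y)) h) := by
  have h' : φ.symm y = x := φ.symm_apply_eq.2 h.symm
  refine Function.bijective_iff_has_inverse.2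
    ⟨homotopyGroupMap N (φ.symm : C(Y, X)) h', fun α => ?_, fun β => ?_⟩
  · induction α using Quotient.ind with | _ a =>
    exact congrArg (Quotient.mk _) (GenLoop.ext _ _ fun t => φ.symm_apply_apply (a t))
  · induction β using Quotient.ind with | _ b =>
    exact congrArg (Quotient.mk _) (GenLoop.ext _ _ fun t => φ.apply_symm_apply (b t))

/-- The reindexing `π_M(X, x) ≃ π_N(X, x)` of homotopy groups along `M ≃ N`. -/
def homotopyGroupCongr {M N : Type*} (e : M ≃ N) : HomotopyGroup M X x ≃ HomotopyGroup N X x :=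
  Quotient.congr (GenLoop.congr x e).toEquiv fun a b => by
    refine genLoop_homotopic_iff_joined.trans (Iff.trans ?_ genLoop_homotopic_iff_joined.symm)
    exact ⟨fun H => H.map (GenLoop.congr x e).continuous, fun H => by
      simpa using H.map (GenLoop.congr x e).symm.continuous⟩

theorem card_homotopyGroupKer_congr {M N : Type*} (e : M ≃ N) (f : C(X, Y)) (h : f x = y) :
    Nat.card (homotopyGroupKer M f h) = Nat.card (homotopyGroupKer N f h) := by
  refine Nat.card_congr ((homotopyGroupCongr e).subtypeEquiv fun α => ?_)
  induction α using Quotient.ind with | _ a =>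
  exact (homotopyGroupCongr e).injective.eq_iff.symm

/-- The homotopy classes of generalized loops are the path components of `Ω^N X`. -/
def homotopyGroupEquivZerothHomotopy (N : Type*) :
    HomotopyGroup N X x ≃ ZerothHomotopy (Ω^ N X x) :=
  Quotient.congrRight fun _ _ => genLoop_homotopic_iff_joined

theorem card_components_genLoop (N : Type*) (f : C(X, Y)) (h : f x = y) :
    Nat.card {v : ZerothHomotopy (Ω^ N X x) //
        pi0Map (genLoopMap N f h).continuous v = toPi0 GenLoop.const} =
      Nat.card (homotopyGroupKer N f h) := by
  refine Nat.card_congr ((homotopyGroupEquivZerothHomotopy N).subtypeEquiv fun α => ?_).symm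
  induction α using Quotient.ind with | _ a =>
  exact (homotopyGroupEquivZerothHomotopy N).injective.eq_iff.symm

theorem card_homotopyGroupKer_fin_zero (f : C(X, Y)) (h : f x = y) :
    Nat.card (homotopyGroupKer (Fin 0) f h) =
      Nat.card {v : ZerothHomotopy X // pi0Map f.continuous v = toPi0 y} := by
  refine Nat.card_congr (HomotopyGroup.pi0EquivZerothHomotopy.subtypeEquiv fun α => ?_)
  induction α using Quotient.ind with | _ a =>
  exact HomotopyGroup.pi0EquivZerothHomotopy.injective.eq_iff.symm

theorem card_ker_mapOfEq_genLoopMap {N : Type*} (i : N) (f : C(X, Y)) (h : f x = y) :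
    Nat.card (FundamentalGroup.mapOfEq (genLoopMap {j // j ≠ i} f h) (genLoopMap_const f h)).ker =
      Nat.card (homotopyGroupKer N f h) := by
  classical
  refine Nat.card_congr ((homotopyGroupEquivFundamentalGroup i).subtypeEquiv fun α => ?_).symm
  induction α using Quotient.ind with | _ a =>
  have natural : homotopyGroupEquivFundamentalGroup i (homotopyGroupMap N f h ⟦a⟧) =
      FundamentalGroup.mapOfEq (genLoopMap {j // j ≠ i} f h) (genLoopMap_const f h)
        (homotopyGroupEquivFundamentalGroup i ⟦a⟧) := by
    rw [FundamentalGroup.mapOfEq_apply]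
    rfl
  have one_eq : homotopyGroupEquivFundamentalGroup i (default : HomotopyGroup N Y y) = 1 := rfl
  rw [MonoidHom.mem_ker, ← natural, ← one_eq]
  exact (homotopyGroupEquivFundamentalGroup i).injective.eq_iff.symm

theorem IsHurewiczFibration.exists_genLoop_rep {N : Type} [Finite N] {p : C(X, Y)}
    (hp : IsHurewiczFibration p) (h : p x = y) {α : HomotopyGroup N X x} {c : Ω^ N Y y}
    (hα : homotopyGroupMap N p h α = ⟦c⟧) :
    ∃ a : Ω^ N X x, ⟦a⟧ = α ∧ genLoopMap N p h a = c := by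
  induction α using Quotient.ind with | _ a =>
  obtain ⟨γ⟩ := genLoop_homotopic_iff_joined.1 (Quotient.exact hα)
  obtain ⟨a', δ, hδ⟩ := (isHurewiczFibration_genLoopMap hp h).exists_path_lift γ
  refine ⟨a', Quotient.sound (genLoop_homotopic_iff_joined.2 ⟨δ.symm⟩), ?_⟩
  rw [← δ.target, hδ, γ.target]

end HomotopyGroupMap

namespace IsFiberSequence

variable {E B F : Type*} [TopologicalSpace E] [TopologicalSpace B] [TopologicalSpace F]
  {j : C(F, E)} {p : C(E, B)} {b : B} {e : E} {w : F}

theorem card_homotopyGroupKer_mul_card_homotopyGroupKer_succ (h : IsFiberSequence j p b)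
    (hj : j w = e) (hp : p e = b) (n : ℕ) :
    Nat.card (homotopyGroupKer (Fin n) j hj) * Nat.card (homotopyGroupKer (Fin (n + 1)) j hj) *
        Nat.card (HomotopyGroup (Fin (n + 1)) E e) =
      Nat.card (HomotopyGroup (Fin (n + 1)) B b) *
        Nat.card (HomotopyGroup (Fin (n + 1)) F w) := by
  have card_eq := (h.genLoop (N := {k : Fin (n + 1) // k ≠ 0}) hj hp).card_components_mul_card_ker
    (genLoopMap_const j hj) (genLoopMap_const p hp)
  rwa [card_components_genLoop, card_ker_mapOfEq_genLoopMap,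
    ← card_homotopyGroupKer_congr (finSuccAboveEquiv 0),
    ← Nat.card_congr (homotopyGroupEquivFundamentalGroup 0),
    ← Nat.card_congr (homotopyGroupEquivFundamentalGroup 0),
    ← Nat.card_congr (homotopyGroupEquivFundamentalGroup 0)] at card_eq

theorem card_homotopyGroupKer_dvd (h : IsFiberSequence j p b) (hj : j w = e) (hp : p e = b)
    (n : ℕ) :
    Nat.card (homotopyGroupKer (Fin n) j hj) ∣ Nat.card (HomotopyGroup (Fin (n + 1)) B b) := by
  have card_eq := (h.genLoop (N := {k : Fin (n + 1) // k ≠ 0}) hj hp).card_components_mul_card_range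
    (genLoopMap_const p hp)
  rw [card_components_genLoop, ← card_homotopyGroupKer_congr (finSuccAboveEquiv 0),
    ← Nat.card_congr (homotopyGroupEquivFundamentalGroup 0)] at card_eq
  exact Dvd.intro _ card_eq

end IsFiberSequence

section MapPathSpace

variable {X Y : Type*} [TopologicalSpace X] [TopologicalSpace Y]

/-- The mapping path space of `f`: pairs `(x, p)` with `p` a path starting at `f x`. -/
abbrev MapPathSpace (f : C(X, Y)) : Type _ :=
  {p : X × C(I, Y) // p.2 0 = f p.1}

namespace MapPathSpace

variable (f : C(X, Y))

/-- The projection `(x, p) ↦ x`. -/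
def fst : C(MapPathSpace f, X) :=
  ⟨fun e => e.1.1, by fun_prop⟩

/-- The end point `(x, p) ↦ p 1`. -/
def snd : C(MapPathSpace f, Y) :=
  ⟨fun e => e.1.2 1, by fun_prop⟩

theorem isHurewiczFibration_prodMk : IsHurewiczFibration ((fst f).prodMk (snd f)) := by
  intro T _ g a ha
  have ha_fst (t) : (a t).1.1 = (g (t, 0)).1 := congrArg Prod.fst (ha t)
  have ha_snd (t) : (a t).1.2 1 = (g (t, 0)).2 := congrArg Prod.snd (ha t)
  obtain ⟨P, hP, hP_source, hP_target⟩ := exists_path_extension ⟨fun t => (a t).1.2, by fun_prop⟩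
    ⟨fun r => f (g r).1, by fun_prop⟩ ⟨fun r => (g r).2, by fun_prop⟩
    (fun t => (congrArg f (ha_fst t).symm).trans (a t).2.symm) fun t => (ha_snd t).symm
  exact ⟨⟨fun r => ⟨((g r).1, P r), hP_source r⟩, by fun_prop⟩,
    fun r => Prod.ext rfl (hP_target r),
    fun t => Subtype.ext (Prod.ext (ha_fst t).symm (hP t))⟩

theorem isHurewiczFibration_fst : IsHurewiczFibration (fst f) :=
  _root_.isHurewiczFibration_fst.comp (isHurewiczFibration_prodMk f)

theorem isHurewiczFibration_snd : IsHurewiczFibration (snd f) :=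
  _root_.isHurewiczFibration_snd.comp (isHurewiczFibration_prodMk f)

theorem surjective_homotopyGroupMap_fst (N : Type*) [Finite N] (e : MapPathSpace f) :
    Function.Surjective (homotopyGroupMap N (fst f) (rfl : fst f e = _)) := by
  rintro ⟨a⟩
  obtain ⟨F, hF_zero, hF_boundary⟩ := exists_homotopy_extension (N := N) (T := Unit)
    ⟨fun r => f (a r.2), by fun_prop⟩ ⟨fun r => e.1.2 r.2.2, by fun_prop⟩
    fun _ y => e.2.trans (congrArg f (a.2 y y.2).symm)
  let paths : C(N → I, C(I, Y)) := .curry ⟨fun r => F ((), r), by fun_prop⟩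
  refine ⟨⟦⟨⟨fun t => ⟨(a t, paths t), hF_zero () t⟩, by fun_prop⟩, fun t ht => ?_⟩⟧, rfl⟩
  exact Subtype.ext (Prod.ext (a.2 t ht) (ContinuousMap.ext (hF_boundary () ⟨t, ht⟩)))

/-- The two families of paths agree on the open box, so they are homotopic relative to it. -/
theorem genLoop_homotopic_of_fst_eq {N : Type*} [Finite N] {e : MapPathSpace f}
    {a b : Ω^ N (MapPathSpace f) e}
    (h : genLoopMap N (fst f) rfl a = genLoopMap N (fst f) rfl b) : GenLoop.Homotopic a b := by
  have hfst (t) : (a t).1.1 = (b t).1.1 := congrArg (· t) h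
  let A : C((N → I) × I, Y) := ⟨fun q => (a q.1).1.2 q.2, by fun_prop⟩
  let B : C((N → I) × I, Y) := ⟨fun q => (b q.1).1.2 q.2, by fun_prop⟩
  have agree : Set.EqOn A B (openBox N) := by
    rintro ⟨t, s⟩ (ht | rfl)
    · exact congrArg (fun e : MapPathSpace f => e.1.2 s) ((a.2 t ht).trans (b.2 t ht).symm)
    · exact (a t).2.trans ((congrArg f (hfst t)).trans (b t).2.symm)
  obtain ⟨H⟩ := homotopicRel_of_eqOn_openBox agree
  let paths : C(I × (N → I), C(I, Y)) := .curry ⟨fun r => H (r.1.1, (r.1.2, r.2)), by fun_prop⟩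
  have paths_source (r : I × (N → I)) : paths r 0 = f (a r.2).1.1 :=
    (H.eq_fst r.1 (x := (r.2, 0)) (Or.inr rfl)).trans (a r.2).2
  refine ⟨⟨⟨⟨fun r => ⟨((a r.2).1.1, paths r), paths_source r⟩, by fun_prop⟩, fun t => ?_,
    fun t => ?_⟩, fun u t ht => ?_⟩⟩
  · exact Subtype.ext (Prod.ext rfl (ContinuousMap.ext fun s => H.apply_zero (t, s)))
  · exact Subtype.ext (Prod.ext (hfst t) (ContinuousMap.ext fun s => H.apply_one (t, s)))
  · exact Subtype.ext (Prod.ext rfl (ContinuousMap.ext fun s =>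
      H.eq_fst u (x := (t, s)) (Or.inl ht)))

theorem bijective_homotopyGroupMap_fst (N : Type) [Finite N] (e : MapPathSpace f) :
    Function.Bijective (homotopyGroupMap N (fst f) (rfl : fst f e = _)) := by
  refine ⟨?_, surjective_homotopyGroupMap_fst f N e⟩
  rintro α ⟨b⟩ h
  obtain ⟨a, rfl, ha⟩ := (isHurewiczFibration_fst f).exists_genLoop_rep rfl h
  exact Quotient.sound (genLoop_homotopic_of_fst_eq f ha)

/-- The reversal of paths, on the free path space `MapPathSpace id`. -/
def reverse (Y : Type*) [TopologicalSpace Y] :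
    MapPathSpace (ContinuousMap.id Y) ≃ₜ MapPathSpace (ContinuousMap.id Y) :=
  let rev : C(MapPathSpace (ContinuousMap.id Y), MapPathSpace (ContinuousMap.id Y)) :=
    ⟨fun e => ⟨(e.1.2 1, e.1.2.comp ⟨unitInterval.symm, by fun_prop⟩), by simp⟩, by fun_prop⟩
  have rev_rev (e) : rev (rev e) = e := Subtype.ext <| Prod.ext
    ((congrArg e.1.2 unitInterval.symm_one).trans e.2)
    (ContinuousMap.ext fun s => congrArg e.1.2 (unitInterval.symm_symm s))
  ⟨⟨rev, rev, rev_rev, rev_rev⟩, rev.continuous, rev.continuous⟩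

theorem bijective_homotopyGroupMap_snd_id (N : Type) [Finite N]
    (e : MapPathSpace (ContinuousMap.id Y)) :
    Function.Bijective (homotopyGroupMap N (snd (ContinuousMap.id Y)) (rfl : snd _ e = _)) := by
  let rev : C(MapPathSpace (ContinuousMap.id Y), MapPathSpace (ContinuousMap.id Y)) := reverse Y
  have snd_eq : homotopyGroupMap N (snd (ContinuousMap.id Y)) (rfl : snd _ e = _) =
      homotopyGroupMap N (fst _) rfl ∘ homotopyGroupMap N rev rfl :=
    funext fun α => homotopyGroupMap_comp N rev (fst _) rfl rfl α
  rw [snd_eq]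
  exact (bijective_homotopyGroupMap_fst _ N (reverse Y e)).comp
    (bijective_homotopyGroupMap_homeomorph N (reverse Y) rfl)

end MapPathSpace

theorem nonempty_homotopyGroup_equiv_of_joined (N : Type) [Finite N] {x x' : X}
    (h : Joined x x') : Nonempty (HomotopyGroup N X x ≃ HomotopyGroup N X x') := by
  obtain ⟨γ⟩ := h
  let e : MapPathSpace (ContinuousMap.id X) := ⟨(x, γ), γ.source⟩
  have snd_e : MapPathSpace.snd _ e = x' := γ.target
  rw [← snd_e]
  exact ⟨(Equiv.ofBijective _ (MapPathSpace.bijective_homotopyGroupMap_fst _ N e)).symm.trans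
    (Equiv.ofBijective _ (MapPathSpace.bijective_homotopyGroupMap_snd_id N e))⟩

end MapPathSpace

section AlternatingProduct

open Function

variable {G : Type*} [CommGroupWithZero G]

theorem finprod_succ_div {u : ℕ → G} (hu : ∀ n, u n ≠ 0) (hu_fin : u.HasFiniteMulSupport) :
    ∏ᶠ n, u (n + 1) / u n = (u 0)⁻¹ := by
  obtain ⟨M, hM⟩ := Set.Finite.bddAbove hu_fin
  have u_eq_one {n} (hn : M < n) : u n = 1 := by
    by_contra h
    exact hn.not_ge (hM h)
  have support_subset : (mulSupport fun n => u (n + 1) / u n) ⊆ Finset.range (M + 1) := by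
    intro n hn
    by_contra h
    have hMn : M < n := by simpa using h
    exact hn (by simp only [u_eq_one hMn, u_eq_one (hMn.trans n.lt_succ_self), div_one])
  rw [finprod_eq_prod_of_mulSupport_subset _ support_subset,
    Finset.prod_range_induction _ (fun n => u n / u 0) (div_self (hu 0)) _ fun n _ => ?_,
    u_eq_one M.lt_succ_self, one_div]
  exact ((mul_comm _ _).trans (div_mul_div_cancel₀ (hu n))).symm

theorem finprod_zpow_eq_div_mul {a b c k : ℕ → G} (ha : a.HasFiniteMulSupport)
    (hb : b.HasFiniteMulSupport) (hk : k.HasFiniteMulSupport) (hb_ne : ∀ n, b n ≠ 0)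
    (hk_ne : ∀ n, k n ≠ 0) (h : ∀ n, k n * k (n + 1) * a n = b n * c n) :
    ∏ᶠ n, c n ^ ((-1 : ℤ) ^ (n + 1)) =
      (∏ᶠ n, a n ^ ((-1 : ℤ) ^ (n + 1))) / (∏ᶠ n, b n ^ ((-1 : ℤ) ^ (n + 1))) * (k 0)⁻¹ := by
  have support_zpow {v : ℕ → G} (hv : v.HasFiniteMulSupport) (e : ℕ → ℤ) :
      HasFiniteMulSupport fun n => v n ^ e n :=
    Set.Finite.subset hv fun n hn hvn => hn (by simp only [hvn, one_zpow])
  let u (n : ℕ) : G := k n ^ ((-1 : ℤ) ^ n)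
  have hu : u.HasFiniteMulSupport := support_zpow hk _
  have hu_succ : HasFiniteMulSupport fun n => u (n + 1) :=
    Set.Finite.preimage (add_left_injective 1).injOn hu
  have u_div (n : ℕ) : u (n + 1) / u n = (k n * k (n + 1)) ^ ((-1 : ℤ) ^ (n + 1)) := by
    rw [mul_comm, mul_zpow, div_eq_mul_inv, ← zpow_neg, ← neg_one_mul ((-1 : ℤ) ^ n), ← pow_succ']
  have c_zpow (n : ℕ) : c n ^ ((-1 : ℤ) ^ (n + 1)) =
      a n ^ ((-1 : ℤ) ^ (n + 1)) / b n ^ ((-1 : ℤ) ^ (n + 1)) * (u (n + 1) / u n) := by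
    rw [u_div, ← div_zpow, ← mul_zpow, div_mul_eq_mul_div, mul_comm (a n), h,
      mul_div_cancel_left₀ _ (hb_ne n)]
  rw [finprod_congr c_zpow,
    finprod_mul_distrib ((support_zpow ha _).fun_div (support_zpow hb _)) (hu_succ.fun_div hu),
    finprod_div_distrib (support_zpow ha _) (support_zpow hb _),
    finprod_succ_div (fun n => zpow_ne_zero _ (hk_ne n)) hu]
  simp only [pow_zero, zpow_one]

end AlternatingProduct

section HomotopyFiber

variable {X Y : Type*} [TopologicalSpace X] [TopologicalSpace Y]

/-- The condition of `IsLocallyFinite` at a single base point. -/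
def IsLocallyFiniteAt (X : Type*) [TopologicalSpace X] (x : X) : Prop :=
  (∀ n : ℕ, 1 ≤ n → Finite (HomotopyGroup (Fin n) X x)) ∧
    ∃ N : ℕ, ∀ n : ℕ, N < n → Subsingleton (HomotopyGroup (Fin n) X x)

namespace IsLocallyFiniteAt

variable {x x' : X}

theorem of_joined (hx : IsLocallyFiniteAt X x) (h : Joined x x') : IsLocallyFiniteAt X x' := by
  have equiv (n : ℕ) := (nonempty_homotopyGroup_equiv_of_joined (Fin n) h).some
  obtain ⟨hfin, N, hN⟩ := hx
  refine ⟨fun n hn => ?_, N, fun n hn => ?_⟩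
  · have := hfin n hn
    exact .of_equiv _ (equiv n)
  · have := hN n hn
    exact (equiv n).symm.subsingleton

theorem card_ne_zero (hx : IsLocallyFiniteAt X x) (n : ℕ) :
    Nat.card (HomotopyGroup (Fin (n + 1)) X x) ≠ 0 :=
  have := hx.1 (n + 1) n.succ_pos
  Nat.card_ne_zero.2 ⟨inferInstance, inferInstance⟩

theorem hasFiniteMulSupport_card (hx : IsLocallyFiniteAt X x) :
    Function.HasFiniteMulSupport fun n : ℕ => Nat.card (HomotopyGroup (Fin (n + 1)) X x) := by
  obtain ⟨-, N, hN⟩ := hx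
  refine (Set.finite_le_nat N).subset fun n hn => ?_
  by_contra! hlt
  have := hN (n + 1) (Nat.lt_succ_of_lt (not_le.1 hlt))
  exact hn Nat.card_unique

end IsLocallyFiniteAt

theorem mu_eq_of_joined {x x' : X} (h : Joined x x') : mu X x = mu X x' := by
  refine finprod_congr fun n => ?_
  rw [Nat.card_congr (nonempty_homotopyGroup_equiv_of_joined (Fin (n + 1)) h).some]

/-- The inclusion of the homotopy fiber into the mapping path space. -/
def homotopyFiberIncl (f : C(X, Y)) (y : Y) : C(HomotopyFiber f y, MapPathSpace f) :=
  ⟨fun w => ⟨w.1, w.2.1⟩, by fun_prop⟩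

theorem isFiberSequence_homotopyFiberIncl (f : C(X, Y)) (y : Y) :
    IsFiberSequence (homotopyFiberIncl f y) (MapPathSpace.snd f) y where
  isEmbedding := .of_comp (ContinuousMap.continuous _) continuous_subtype_val .subtypeVal
  range_eq := by
    refine Set.Subset.antisymm ?_ fun e he => ⟨⟨e.1, e.2, he⟩, rfl⟩
    rintro _ ⟨w, rfl⟩
    exact w.2.2
  isHurewiczFibration := MapPathSpace.isHurewiczFibration_snd f

section

variable (f : C(X, Y)) (y : Y) (w : HomotopyFiber f y)

/-- The order of the kernel of `π_n(F_y(f), w) → π_n(X, i w)`; for `n = 0`, the number of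
components of the homotopy fiber which are mapped to the component of `i w`. -/
noncomputable def fiberKerCard (n : ℕ) : ℕ :=
  Nat.card (homotopyGroupKer (Fin n) ⟨fiberIncl f y, continuous_fiberIncl f y⟩
    (rfl : _ = fiberIncl f y w))

theorem fiberKerCard_eq_card_ker (n : ℕ) : fiberKerCard f y w n =
    Nat.card (homotopyGroupKer (Fin n) (homotopyFiberIncl f y)
      (rfl : homotopyFiberIncl f y w = _)) :=
  Nat.card_congr <| Equiv.setCongr <| homotopyGroupKer_comp_of_injective (homotopyFiberIncl f y)
    (MapPathSpace.fst f) rfl rfl (MapPathSpace.bijective_homotopyGroupMap_fst f (Fin n) _).1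

theorem fiberKerCard_dvd (n : ℕ) :
    fiberKerCard f y w n ∣ Nat.card (HomotopyGroup (Fin (n + 1)) Y y) := by
  rw [fiberKerCard_eq_card_ker]
  exact (isFiberSequence_homotopyFiberIncl f y).card_homotopyGroupKer_dvd rfl w.2.2 n

theorem fiberKerCard_mul_fiberKerCard_succ (n : ℕ) :
    fiberKerCard f y w n * fiberKerCard f y w (n + 1) *
        Nat.card (HomotopyGroup (Fin (n + 1)) X (fiberIncl f y w)) =
      Nat.card (HomotopyGroup (Fin (n + 1)) Y y) *
        Nat.card (HomotopyGroup (Fin (n + 1)) (HomotopyFiber f y) w) := by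
  have card_eq : Nat.card (HomotopyGroup (Fin (n + 1)) (MapPathSpace f)
      (homotopyFiberIncl f y w)) = Nat.card (HomotopyGroup (Fin (n + 1)) X (fiberIncl f y w)) :=
    Nat.card_congr (.ofBijective _ (MapPathSpace.bijective_homotopyGroupMap_fst f _ _))
  rw [fiberKerCard_eq_card_ker, fiberKerCard_eq_card_ker, ← card_eq]
  exact (isFiberSequence_homotopyFiberIncl f y).card_homotopyGroupKer_mul_card_homotopyGroupKer_succ
    rfl w.2.2 n

theorem mu_homotopyFiber (hX : IsLocallyFiniteAt X (fiberIncl f y w)) (hY : IsLocallyFiniteAt Y y) :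
    mu (HomotopyFiber f y) w = mu X (fiberIncl f y w) / mu Y y * (fiberKerCard f y w 0 : ℚ)⁻¹ := by
  have dvd := fiberKerCard_dvd f y w
  have support_ker : (fiberKerCard f y w).HasFiniteMulSupport :=
    Set.Finite.subset hY.hasFiniteMulSupport_card fun n hn hone =>
      hn (Nat.eq_one_of_dvd_one (hone ▸ dvd n))
  refine finprod_zpow_eq_div_mul (k := fun n => (fiberKerCard f y w n : ℚ))
    (hX.hasFiniteMulSupport_card.fun_comp Nat.cast_one)
    (hY.hasFiniteMulSupport_card.fun_comp Nat.cast_one) (support_ker.fun_comp Nat.cast_one)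
    (fun n => ?_) (fun n => ?_) fun n => ?_
  · exact_mod_cast hY.card_ne_zero n
  · exact_mod_cast ne_zero_of_dvd_ne_zero (hY.card_ne_zero n) (dvd n)
  · exact_mod_cast fiberKerCard_mul_fiberKerCard_succ f y w n

theorem fiberKerCard_zero_eq_card_components {x : X} (hx : Joined (fiberIncl f y w) x) :
    fiberKerCard f y w 0 = Nat.card {z : ZerothHomotopy (HomotopyFiber f y) //
      pi0Map (continuous_fiberIncl f y) z = toPi0 x} := by
  rw [← toPi0_eq_toPi0_iff.2 hx]
  exact card_homotopyGroupKer_fin_zero _ _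

end

end HomotopyFiber

theorem statement1_general {X Y : Type*} [TopologicalSpace X] [TopologicalSpace Y]
    {f : X → Y} (hf : Continuous f) (y : Y) (x : X)
    (hX : IsLocallyFiniteAt X x) (hY : IsLocallyFiniteAt Y y) (hxy : Joined (f x) y)
    (rep : ZerothHomotopy (HomotopyFiber f y) → HomotopyFiber f y)
    (hrep : ∀ z, toPi0 (rep z) = z) :
    {z : ZerothHomotopy (HomotopyFiber f y) |
        pi0Map (continuous_fiberIncl f y) z = toPi0 x}.Finite ∧
    ∑ᶠ z ∈ {z : ZerothHomotopy (HomotopyFiber f y) |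
        pi0Map (continuous_fiberIncl f y) z = toPi0 x},
        mu (HomotopyFiber f y) (rep z) = mu X x * (mu Y y)⁻¹ := by
  set S := {z | pi0Map (continuous_fiberIncl f y) z = toPi0 x}
  have card_S {w : HomotopyFiber f y} (hw : Joined (fiberIncl f y w) x) :
      fiberKerCard ⟨f, hf⟩ y w 0 = S.ncard := fiberKerCard_zero_eq_card_components ⟨f, hf⟩ y w hw
  have S_ncard_ne_zero : S.ncard ≠ 0 := by
    obtain ⟨γ⟩ := hxy
    rw [← card_S (w := ⟨(x, γ), γ.source, γ.target⟩) (Joined.refl x)]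
    exact ne_zero_of_dvd_ne_zero (hY.card_ne_zero 0) (fiberKerCard_dvd ⟨f, hf⟩ y _ 0)
  have S_finite := Set.finite_of_ncard_ne_zero S_ncard_ne_zero
  have joined_rep {z} (hz : z ∈ S) : Joined (fiberIncl f y (rep z)) x :=
    toPi0_eq_toPi0_iff.1 ((congrArg (pi0Map (continuous_fiberIncl f y)) (hrep z)).trans hz)
  have mu_rep (z) (hz : z ∈ S) :
      mu (HomotopyFiber f y) (rep z) = mu X x / mu Y y * (S.ncard : ℚ)⁻¹ := by
    rw [← card_S (joined_rep hz), ← mu_eq_of_joined (joined_rep hz)]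
    exact mu_homotopyFiber ⟨f, hf⟩ y (rep z) (hX.of_joined (joined_rep hz).symm) hY
  refine ⟨S_finite, ?_⟩
  rw [finsum_mem_congr rfl mu_rep, finsum_mem_eq_finite_toFinset_sum _ S_finite, Finset.sum_const,
    nsmul_eq_mul, ← Set.ncard_eq_toFinset_card S S_finite, mul_left_comm,
    mul_inv_cancel₀ (Nat.cast_ne_zero.2 S_ncard_ne_zero), mul_one, div_eq_mul_inv]

theorem statement1 {X Y : Type*} [TopologicalSpace X] [TopologicalSpace Y]
    (hX : IsLocallyFinite X) (hY : IsLocallyFinite Y)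
    {f : X → Y} (hf : Continuous f) (y : Y) (x : X)
    (hxy : Joined (f x) y)
    -- an arbitrary choice of representative points for the components of the homotopy fiber
    (rep : ZerothHomotopy (HomotopyFiber f y) → HomotopyFiber f y)
    (hrep : ∀ z, toPi0 (rep z) = z) :
    {z : ZerothHomotopy (HomotopyFiber f y) |
        pi0Map (continuous_fiberIncl f y) z = toPi0 x}.Finite ∧
    ∑ᶠ z ∈ {z : ZerothHomotopy (HomotopyFiber f y) |
        pi0Map (continuous_fiberIncl f y) z = toPi0 x},
        mu (HomotopyFiber f y) (rep z) = mu X x * (mu Y y)⁻¹ :=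
  statement1_general hf y x (hX x) (hY y) hxy rep hrep
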